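/- Let λ0, λ1 ∈ ℝ with λ0 > 0, λ1 > 0, λ0 + λ1 = 1, and ρ := Matrix.diagonal ![ (λ0 : ℂ), (λ1 : ℂ) ]. Let A1, A2 be Hermitian 2×2 complex matrices with trace 0, and let L1, L2 be their SLDs relative to ρ (L_i μ ν := 2 · A_i μ ν / (λμ + λν)). Then Tr[ρ * (L1 * L2 − L2 * L1)] = (8 · (λ0 − λ1) · ((A1 0 1) * star (A2 0 1)).im) · Complex.I. In particular, the Uhlmann (achievability) quantity ½ Tr[ρ * (L1 L2 − L2 L1)] vanishes if and only if λ0 = λ1 or ((A1 0 1) * star (A2 0 1)).im = 0. -/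

import Mathlib

open Matrix

/-- The symmetric logarithmic derivative of `A` relative to `ρ = diagonal ![λ0, λ1]`,
defined entrywise by `L μ ν = 2 ⬝ A μ ν / (λμ + λν)`. -/
noncomputable def sld (l0 l1 : ℝ) (A : Matrix (Fin 2) (Fin 2) ℂ) : Matrix (Fin 2) (Fin 2) ℂ :=
  Matrix.of fun μ ν => 2 * A μ ν / ((![l0, l1] μ + ![l0, l1] ν : ℝ) : ℂ)

/-!
In the eigenbasis of `ρ`, the trace of `ρ * (X * Y - Y * X)` is the sum of
`(λμ - λν) * (X μ ν * Y ν μ)`. For Hermitian `X` and `Y` the summands at `(μ, ν)` and `(ν, μ)` are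
`z` and `-conj z`, so only imaginary parts survive. Passing from `A` to its symmetric logarithmic
derivative multiplies the entry at `(μ, ν)` by the real number `2 / (λμ + λν)`, hence contributes
`4 / (λμ + λν) ^ 2` to each product; for a qubit only the two equal off-diagonal terms remain.
-/

section FiniteDimension

variable {n : Type*}

theorem apply_mul_star_apply_swap {X Y : Matrix n n ℂ} (hX : X.IsHermitian) (hY : Y.IsHermitian)
    (i j : n) : X j i * star (Y j i) = star (X i j * star (Y i j)) := by
  rw [star_mul', hX.apply j i, hY.apply j i]

/-- The symmetric logarithmic derivative of `A` relative to the state with eigenvalues `p`, written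
in the eigenbasis of that state. At an entry with `p i + p j = 0`, where the defining equation
`2 * A = ρ * L + L * ρ` does not determine `L`, it is `0`. -/
noncomputable def spectralSLD (p : n → ℝ) (A : Matrix n n ℂ) : Matrix n n ℂ :=
  Matrix.of fun i j => 2 * A i j / ((p i + p j : ℝ) : ℂ)

theorem sld_eq_spectralSLD (l0 l1 : ℝ) (A : Matrix (Fin 2) (Fin 2) ℂ) :
    sld l0 l1 A = spectralSLD ![l0, l1] A :=
  rfl

theorem spectralSLD_apply (p : n → ℝ) (A : Matrix n n ℂ) (i j : n) :
    spectralSLD p A i j = ((2 / (p i + p j) : ℝ) : ℂ) * A i j := by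
  simp only [spectralSLD, of_apply]
  push_cast
  ring

theorem isHermitian_spectralSLD (p : n → ℝ) {A : Matrix n n ℂ} (hA : A.IsHermitian) :
    (spectralSLD p A).IsHermitian := by
  refine IsHermitian.ext fun i j => ?_
  rw [spectralSLD_apply, spectralSLD_apply, star_mul', hA.apply, add_comm (p j),
    Complex.star_def, Complex.conj_ofReal]

theorem im_spectralSLD_mul_star (p : n → ℝ) (A B : Matrix n n ℂ) (i j : n) :
    (spectralSLD p A i j * star (spectralSLD p B i j)).im =
      4 / (p i + p j) ^ 2 * (A i j * star (B i j)).im := by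
  have entry_mul : spectralSLD p A i j * star (spectralSLD p B i j) =
      (((2 / (p i + p j)) ^ 2 : ℝ) : ℂ) * (A i j * star (B i j)) := by
    rw [spectralSLD_apply, spectralSLD_apply, star_mul', Complex.star_def, Complex.conj_ofReal]
    push_cast
    ring
  rw [entry_mul, Complex.im_ofReal_mul, div_pow]
  norm_num

variable [Fintype n] [DecidableEq n]

theorem trace_diagonal_mul_commutator {R : Type*} [CommRing R] (d : n → R) (X Y : Matrix n n R) :
    trace (diagonal d * (X * Y - Y * X)) = ∑ i, ∑ j, (d i - d j) * (X i j * Y j i) := by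
  have trace_diagonal_mul_mul (M N : Matrix n n R) :
      trace (diagonal d * (M * N)) = ∑ i, ∑ j, d i * (M i j * N j i) := by
    simp only [trace, diag_apply, diagonal_mul, mul_apply (M := M), Finset.mul_sum]
  rw [mul_sub, trace_sub, trace_diagonal_mul_mul, trace_diagonal_mul_mul Y X,
    Finset.sum_comm (f := fun i j => d i * (Y i j * X j i))]
  simp only [← Finset.sum_sub_distrib, sub_mul, mul_comm (Y _ _)]

theorem trace_diagonal_mul_commutator_of_isHermitian (p : n → ℝ) {X Y : Matrix n n ℂ}
    (hX : X.IsHermitian) (hY : Y.IsHermitian) :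
    trace (diagonal (fun i => (p i : ℂ)) * (X * Y - Y * X)) =
      ((∑ i, ∑ j, (p i - p j) * (X i j * star (Y i j)).im : ℝ) : ℂ) * Complex.I := by
  have re_symm (i j : n) : (X j i * star (Y j i)).re = (X i j * star (Y i j)).re := by
    rw [apply_mul_star_apply_swap hX hY i j, Complex.star_def, Complex.conj_re]
  have re_sum : ∑ i, ∑ j, (p i - p j) * (X i j * star (Y i j)).re = 0 := by
    refine self_eq_neg.mp ?_
    calc ∑ i, ∑ j, (p i - p j) * (X i j * star (Y i j)).re
        = ∑ i, ∑ j, (p j - p i) * (X j i * star (Y j i)).re := Finset.sum_comm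
      _ = -∑ i, ∑ j, (p i - p j) * (X i j * star (Y i j)).re := by
        simp only [re_symm, ← Finset.sum_neg_distrib, ← neg_mul, neg_sub]
  have trace_eq : trace (diagonal (fun i => (p i : ℂ)) * (X * Y - Y * X)) =
      ∑ i, ∑ j, ((p i - p j : ℝ) : ℂ) * (X i j * star (Y i j)) := by
    simp only [trace_diagonal_mul_commutator, hY.apply, Complex.ofReal_sub]
  rw [trace_eq]
  apply Complex.ext
  · simpa only [Complex.re_sum, Complex.re_ofReal_mul, Complex.I_re, mul_zero] using re_sum
  · simp only [Complex.im_sum, Complex.im_ofReal_mul, Complex.I_im, mul_one]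

theorem trace_diagonal_mul_commutator_spectralSLD (p : n → ℝ) {A B : Matrix n n ℂ}
    (hA : A.IsHermitian) (hB : B.IsHermitian) :
    trace (diagonal (fun i => (p i : ℂ)) *
        (spectralSLD p A * spectralSLD p B - spectralSLD p B * spectralSLD p A)) =
      ((∑ i, ∑ j, 4 * (p i - p j) / (p i + p j) ^ 2 * (A i j * star (B i j)).im : ℝ) : ℂ) *
        Complex.I := by
  rw [trace_diagonal_mul_commutator_of_isHermitian p (isHermitian_spectralSLD p hA)
    (isHermitian_spectralSLD p hB)]
  congr 2
  refine Finset.sum_congr rfl fun i _ => Finset.sum_congr rfl fun j _ => ?_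
  rw [im_spectralSLD_mul_star]
  ring

end FiniteDimension

theorem trace_diagonal_mul_commutator_sld (l0 l1 : ℝ) {A1 A2 : Matrix (Fin 2) (Fin 2) ℂ}
    (hA1 : A1.IsHermitian) (hA2 : A2.IsHermitian) :
    trace (diagonal ![(l0 : ℂ), (l1 : ℂ)] *
        (sld l0 l1 A1 * sld l0 l1 A2 - sld l0 l1 A2 * sld l0 l1 A1)) =
      ((8 * (l0 - l1) / (l0 + l1) ^ 2 * (A1 0 1 * star (A2 0 1)).im : ℝ) : ℂ) * Complex.I := by
  have diagonal_eq : ![(l0 : ℂ), (l1 : ℂ)] = fun i => ((![l0, l1] i : ℝ) : ℂ) := by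
    funext i
    fin_cases i <;> rfl
  have im_swap : (A1 1 0 * star (A2 1 0)).im = -(A1 0 1 * star (A2 0 1)).im := by
    rw [apply_mul_star_apply_swap hA1 hA2 0 1, Complex.star_def, Complex.conj_im]
  simp only [diagonal_eq, sld_eq_spectralSLD,
    trace_diagonal_mul_commutator_spectralSLD ![l0, l1] hA1 hA2, Fin.sum_univ_two, im_swap,
    cons_val_zero, cons_val_one]
  congr 2
  ring

theorem stmt_6_general (l0 l1 : ℝ) (hsum : l0 + l1 ≠ 0) {A1 A2 : Matrix (Fin 2) (Fin 2) ℂ}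
    (hA1 : A1.IsHermitian) (hA2 : A2.IsHermitian) :
    trace (diagonal ![(l0 : ℂ), (l1 : ℂ)] *
          (sld l0 l1 A1 * sld l0 l1 A2 - sld l0 l1 A2 * sld l0 l1 A1)) =
        ((8 * (l0 - l1) / (l0 + l1) ^ 2 * (A1 0 1 * star (A2 0 1)).im : ℝ) : ℂ) * Complex.I ∧
      ((1 / 2 : ℂ) * trace (diagonal ![(l0 : ℂ), (l1 : ℂ)] *
          (sld l0 l1 A1 * sld l0 l1 A2 - sld l0 l1 A2 * sld l0 l1 A1)) = 0 ↔
        l0 = l1 ∨ (A1 0 1 * star (A2 0 1)).im = 0) := by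
  have trace_eq := trace_diagonal_mul_commutator_sld l0 l1 hA1 hA2
  refine ⟨trace_eq, ?_⟩
  have half_ne_zero : (1 / 2 : ℂ) ≠ 0 := by norm_num
  have coeff_eq_zero : 8 * (l0 - l1) / (l0 + l1) ^ 2 = 0 ↔ l0 = l1 := by
    simp [hsum, sub_eq_zero]
  rw [trace_eq, mul_eq_zero_iff_left half_ne_zero, mul_eq_zero_iff_right Complex.I_ne_zero,
    Complex.ofReal_eq_zero, mul_eq_zero, coeff_eq_zero]

theorem stmt_6 (l0 l1 : ℝ) (hl0 : 0 < l0) (hl1 : 0 < l1) (hsum : l0 + l1 = 1)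
    (ρ : Matrix (Fin 2) (Fin 2) ℂ) (hρ : ρ = Matrix.diagonal ![(l0 : ℂ), (l1 : ℂ)])
    (A1 A2 : Matrix (Fin 2) (Fin 2) ℂ)
    (hA1 : A1.IsHermitian) (hA2 : A2.IsHermitian)
    (hA1tr : A1.trace = 0) (hA2tr : A2.trace = 0)
    (L1 L2 : Matrix (Fin 2) (Fin 2) ℂ) (hL1 : L1 = sld l0 l1 A1) (hL2 : L2 = sld l0 l1 A2) :
    Matrix.trace (ρ * (L1 * L2 - L2 * L1))
        = ((8 * (l0 - l1) * (A1 0 1 * star (A2 0 1)).im : ℝ) : ℂ) * Complex.I ∧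
      ((1 / 2 : ℂ) * Matrix.trace (ρ * (L1 * L2 - L2 * L1)) = 0 ↔
        l0 = l1 ∨ (A1 0 1 * star (A2 0 1)).im = 0) := by
  subst hρ hL1 hL2
  simpa only [hsum, one_pow, div_one] using stmt_6_general l0 l1 (hsum ▸ one_ne_zero) hA1 hA2
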